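/- Let u and v be words in the free monoid on the letters β₁, …, β_{n−1} whose images in the braid monoid with zero 𝔹ₙ are non-zero. Then u and v have the same image in 𝔹ₙ if and only if σ̃(u) = σ̃(v). In particular, the induced function σ : 𝔹ₙ ∖ {0} → Sₙ (characterized by σ_{β_p} = (p p+1) and σ_{xy} = σ_x ∘ σ_y for non-zero x, y with xy ≠ 0) is well defined and injective. -/

import Mathlib

/-!
A non-zero class in `𝔹ₙ` determines the permutation because the congruence defining `𝔹ₙ` is
contained in the relation "same class, and same permutation unless the class is zero", which is
a congruence since zero is absorbing (`permCon`, `bmzCon_le_permCon`).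

Conversely, work in the product `𝔹ₙ × Perm ℕ` with the generators `(β_i, (i i+1))`, which satisfy
the commutation and braid relations. Call canonical the products of descending segments
`β_{k} β_{k-1} ⋯ β_{q}` with `k` increasing (`Can`). Multiplying a canonical product on the right
by a generator gives a canonical product or one whose first component is zero: the generator
either commutes past the last segment, prolongs it, produces a square, or moves to its left with
its index lowered by one (`Can.mul`). Hence a word with non-zero class is canonical. The
permutation of a canonical product determines it, since the lowest index in the last segment is the
preimage of the largest point (`Can.eq_of_snd_eq`). So the permutation of a word with
non-zero class determines the class.
-/

/-!
The braid monoid with zero `𝔹ₙ`, realized as the quotient of the free monoid on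
letters `β₁, …, β_{n−1}, z` by the congruence generated by the braid relations,
`β_p β_p = 0`, `β_p z = z = z β_p` and `z z = z`, with `0 := z`.

Statement 0: every non-zero element `x ∈ 𝔹ₙ` can be written as
`x = β_{1,q₁} ⋯ β_{n−1, q_{n−1}}` with `1 ≤ q_p ≤ p + 1`, and the tuple
`(q₁, …, q_{n−1})` satisfying these bounds is uniquely determined by `x`.
-/

namespace BraidMonoidZero

/-- Letters: `some i` is the generator `β_{i+1}` (for `i : Fin (n-1)`), `none` is `z`. -/
abbrev Letter (n : ℕ) := Option (Fin (n - 1))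

/-- The defining relations of the braid monoid with zero. -/
inductive Rel (n : ℕ) : FreeMonoid (Letter n) → FreeMonoid (Letter n) → Prop
  | comm (i j : Fin (n - 1)) (h : i.val + 1 < j.val) :
      Rel n (FreeMonoid.of (some j) * FreeMonoid.of (some i))
            (FreeMonoid.of (some i) * FreeMonoid.of (some j))
  | braid (i j : Fin (n - 1)) (h : j.val = i.val + 1) :
      Rel n (FreeMonoid.of (some j) * FreeMonoid.of (some i) * FreeMonoid.of (some j))
            (FreeMonoid.of (some i) * FreeMonoid.of (some j) * FreeMonoid.of (some i))
  | square (i : Fin (n - 1)) :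
      Rel n (FreeMonoid.of (some i) * FreeMonoid.of (some i)) (FreeMonoid.of none)
  | zright (i : Fin (n - 1)) :
      Rel n (FreeMonoid.of (some i) * FreeMonoid.of none) (FreeMonoid.of none)
  | zleft (i : Fin (n - 1)) :
      Rel n (FreeMonoid.of none * FreeMonoid.of (some i)) (FreeMonoid.of none)
  | zz : Rel n (FreeMonoid.of none * FreeMonoid.of none) (FreeMonoid.of none)

/-- The congruence generated by the defining relations. -/
def bmzCon (n : ℕ) : Con (FreeMonoid (Letter n)) := conGen (Rel n)

/-- The braid monoid with zero `𝔹ₙ`. -/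
abbrev BMZ (n : ℕ) := (bmzCon n).Quotient

/-- The zero element `0 = z` of `𝔹ₙ`. -/
def zero (n : ℕ) : BMZ n := (bmzCon n).mk' (FreeMonoid.of none)

/-- The generator `β_{i+1}` of `𝔹ₙ` (so subscripts range over `1, …, n-1`). -/
def gen (n : ℕ) (i : Fin (n - 1)) : BMZ n := (bmzCon n).mk' (FreeMonoid.of (some i))

/-- The generator `β_r`, indexed by its 1-based subscript `r ∈ {1, …, n-1}`. -/
def genNat (n r : ℕ) : BMZ n := if h : r - 1 < n - 1 then gen n ⟨r - 1, h⟩ else 1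

/-- `betaSeg n p q` is `β_{p,q} = β_p β_{p-1} ⋯ β_q` (the identity when `q = p + 1`). -/
def betaSeg (n p q : ℕ) : BMZ n :=
  ((List.range' q (p + 1 - q)).reverse.map (genNat n)).prod

/-- The product `β_{1,q₁} · β_{2,q₂} · ⋯ · β_{n−1,q_{n−1}}`, where the value `q i`
corresponds to `q_{i+1}` for `i : Fin (n-1)`. -/
def normalProd (n : ℕ) (q : Fin (n - 1) → ℕ) : BMZ n :=
  ((List.finRange (n - 1)).map (fun i => betaSeg n (i.val + 1) (q i))).prod

/-- The transposition `(p, p+1)` of `{1, …, n}` associated to the generator `β_p`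
(`i : Fin (n-1)` corresponds to `p = i + 1`; in `Fin n` it swaps positions `i` and `i+1`). -/
def swapAt (n : ℕ) (i : Fin (n - 1)) : Equiv.Perm (Fin n) :=
  Equiv.swap ⟨i.val, lt_of_lt_of_le i.isLt (Nat.sub_le n 1)⟩
    ⟨i.val + 1, by have h := i.isLt; omega⟩

/-- The monoid homomorphism `σ̃` from the free monoid on `β₁, …, β_{n−1}` to `Sₙ`
sending `β_p` to the transposition `(p, p+1)`.  Note that multiplication of
permutations is composition, so `σ̃(xy) = σ̃(x) ∘ σ̃(y)`. -/
def permHom (n : ℕ) : FreeMonoid (Fin (n - 1)) →* Equiv.Perm (Fin n) :=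
  FreeMonoid.lift (fun i => swapAt n i)

/-- The canonical monoid homomorphism from the free monoid on `β₁, …, β_{n−1}` to `𝔹ₙ`. -/
def toBMZ (n : ℕ) : FreeMonoid (Fin (n - 1)) →* BMZ n :=
  FreeMonoid.lift (fun i => gen n i)

/-! ### Canonical products of descending segments -/

section Canonical

variable {M : Type*} [Monoid M]

/-- The descending product `g (q+m-1) ⋯ g (q+1) g q` of `m` consecutive generators. -/
def seg (g : ℕ → M) (q : ℕ) : ℕ → M
  | 0 => 1
  | m + 1 => g (q + m) * seg g q m

theorem seg_mul_lo (g : ℕ → M) (hc : ∀ i j, i + 1 < j → g j * g i = g i * g j)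
    (q i m : ℕ) (h : i + 1 < q) : seg g q m * g i = g i * seg g q m := by
  induction m with
  | zero => simp [seg]
  | succ m ih =>
    rw [seg, mul_assoc, ih, ← mul_assoc, hc i (q + m) (by omega), mul_assoc]

theorem seg_mul_hi (g : ℕ → M) (hc : ∀ i j, i + 1 < j → g j * g i = g i * g j)
    (q i m : ℕ) (h : q + m < i) : seg g q m * g i = g i * seg g q m := by
  induction m with
  | zero => simp [seg]
  | succ m ih =>
    rw [seg, mul_assoc, ih (by omega), ← mul_assoc, ← hc (q + m) i (by omega), mul_assoc]

theorem seg_succ_mul (g : ℕ → M) (q m : ℕ) : seg g (q + 1) m * g q = seg g q (m + 1) := by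
  induction m with
  | zero => simp [seg]
  | succ m ih =>
    rw [seg, mul_assoc, ih, seg.eq_2 g q (m + 1), show q + 1 + m = q + (m + 1) by omega]

/-- Moving an inner generator leftwards through a descending segment lowers its index by one:
this is where the braid relation enters. -/
theorem seg_mul_shift (g : ℕ → M) (hc : ∀ i j, i + 1 < j → g j * g i = g i * g j)
    (hb : ∀ i, g (i + 1) * g i * g (i + 1) = g i * g (i + 1) * g i)
    (q i m : ℕ) (h : q ≤ i) (h' : i + 1 < q + m) :
    seg g q m * g (i + 1) = g i * seg g q m := by
  induction m with
  | zero => omega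
  | succ m ih =>
    by_cases hi : i + 1 < q + m
    · rw [seg, mul_assoc, ih hi, ← mul_assoc, hc i (q + m) hi, mul_assoc]
    · obtain ⟨m, rfl⟩ : ∃ k, m = k + 1 := ⟨m - 1, by omega⟩
      obtain rfl : i = q + m := by omega
      rw [seg, seg, mul_assoc, mul_assoc, seg_mul_hi g hc q (q + m + 1) m (by omega),
        ← mul_assoc, ← mul_assoc, show q + (m + 1) = q + m + 1 by omega, hb]
      simp only [mul_assoc]

/-- `Can g k c` says that `c` is a canonical product `s₁ s₂ ⋯ s_k`, where `s₁ = 1` and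
each later `s_j` is a descending segment (possibly empty) starting at `g (j-2)`; only
`g 0, …, g (k-2)` occur in `c`. -/
inductive Can (g : ℕ → M) : ℕ → M → Prop
  | zero : Can g 0 1
  | succ (q m : ℕ) (c : M) (h : Can g (q + m) c) : Can g (q + m + 1) (c * seg g q m)

theorem Can.one (g : ℕ → M) (k : ℕ) : Can g k 1 := by
  induction k with
  | zero => exact .zero
  | succ k ih => simpa [seg] using Can.succ k 0 1 ih

/-- Right multiplication by a generator preserves canonical products, unless it creates
a square; `Z` is any two-sided ideal containing the squares. -/
theorem Can.mul (g : ℕ → M) (hc : ∀ i j, i + 1 < j → g j * g i = g i * g j)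
    (hb : ∀ i, g (i + 1) * g i * g (i + 1) = g i * g (i + 1) * g i)
    (Z : M → Prop) (hZl : ∀ x y, Z y → Z (x * y)) (hZr : ∀ x y, Z x → Z (x * y))
    (hs : ∀ i, Z (g i * g i))
    (k : ℕ) (c : M) (h : Can g k c) (i : ℕ) (hi : i + 1 < k) :
    Z (c * g i) ∨ Can g k (c * g i) := by
  induction h generalizing i with
  | zero => omega
  | succ q m c h ih =>
    rcases lt_trichotomy (i + 1) q with hlt | rfl | hgt
    · rw [mul_assoc, seg_mul_lo g hc q i m hlt, ← mul_assoc]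
      rcases ih i (by omega) with hz | hz
      · exact .inl (hZr _ _ hz)
      · exact .inr (.succ _ _ _ hz)
    · right
      rw [mul_assoc, seg_succ_mul]
      have e : i + 1 + m = i + (m + 1) := by omega
      rw [e] at h ⊢
      exact .succ _ _ _ h
    · rcases Nat.lt_or_ge q i with hq | hq
      · obtain ⟨i, rfl⟩ : ∃ j, i = j + 1 := ⟨i - 1, by omega⟩
        rw [mul_assoc, seg_mul_shift g hc hb q i m (by omega) (by omega), ← mul_assoc]
        rcases ih i (by omega) with hz | hz
        · exact .inl (hZr _ _ hz)
        · exact .inr (.succ _ _ _ hz)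
      · obtain rfl : i = q := by omega
        obtain ⟨m, rfl⟩ : ∃ j, m = j + 1 := ⟨m - 1, by omega⟩
        left
        rw [← seg_succ_mul, mul_assoc, mul_assoc]
        exact hZl _ _ (hZl _ _ (hs i))

end Canonical

/-! ### Canonical products are determined by their permutation -/

section Perm

/-- The adjacent transposition `(i i+1)`, as a permutation of `ℕ`. -/
def nswap (i : ℕ) : Equiv.Perm ℕ := Equiv.swap i (i + 1)

theorem nswap_comm (i j : ℕ) (h : i + 1 < j) : nswap j * nswap i = nswap i * nswap j := by
  ext x
  simp only [nswap, Equiv.Perm.mul_apply, Equiv.swap_apply_def]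
  split_ifs <;> omega

theorem nswap_braid (i : ℕ) :
    nswap (i + 1) * nswap i * nswap (i + 1) = nswap i * nswap (i + 1) * nswap i := by
  ext x
  simp only [nswap, Equiv.Perm.mul_apply, Equiv.swap_apply_def]
  split_ifs <;> omega

variable {M : Type*} [Monoid M]

/-- The generator `b i`, paired with the transposition `(i i+1)`. -/
def pairGen (b : ℕ → M) (i : ℕ) : M × Equiv.Perm ℕ := (b i, nswap i)

theorem seg_snd_start (b : ℕ → M) (q m : ℕ) : (seg (pairGen b) q m).2 q = q + m := by
  induction m with
  | zero => rfl
  | succ m ih => simp [seg, pairGen, nswap, ih, add_assoc]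

theorem seg_snd_fix (b : ℕ → M) (q m x : ℕ) (h : q + m < x) :
    (seg (pairGen b) q m).2 x = x := by
  induction m with
  | zero => rfl
  | succ m ih =>
    rw [seg, Prod.snd_mul, Equiv.Perm.mul_apply, ih (by omega)]
    exact Equiv.swap_apply_of_ne_of_ne (by omega) (by omega)

theorem Can.snd_fix (b : ℕ → M) (k : ℕ) (c : M × Equiv.Perm ℕ) (h : Can (pairGen b) k c)
    (x : ℕ) (hx : k ≤ x) : c.2 x = x := by
  induction h with
  | zero => rfl
  | succ q m c h ih =>
    rw [Prod.snd_mul, Equiv.Perm.mul_apply, seg_snd_fix b q m x (by omega), ih (by omega)]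

/-- A canonical product is determined by its permutation: the last segment
`b (k-1) ⋯ b q` is recovered from `q`, the preimage of the largest point `k`. -/
theorem Can.eq_of_snd_eq (b : ℕ → M) (k : ℕ) (c c' : M × Equiv.Perm ℕ)
    (h : Can (pairGen b) k c) (h' : Can (pairGen b) k c') (e : c.2 = c'.2) : c = c' := by
  induction k generalizing c c' with
  | zero =>
    cases h
    cases h'
    rfl
  | succ k ih =>
    generalize hk : k + 1 = k₁ at h h'
    cases h with
    | zero => omega
    | succ q m d hd =>
      generalize hk' : q + m + 1 = k₂ at h'
      cases h' with
      | zero => omega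
      | succ q' m' d' hd' =>
        have e₁ : (d * seg (pairGen b) q m).2 q = k := by
          rw [Prod.snd_mul, Equiv.Perm.mul_apply, seg_snd_start, hd.snd_fix b _ _ _ le_rfl]
          omega
        have e₂ : (d' * seg (pairGen b) q' m').2 q' = k := by
          rw [Prod.snd_mul, Equiv.Perm.mul_apply, seg_snd_start, hd'.snd_fix b _ _ _ le_rfl]
          omega
        rw [← e] at e₂
        obtain rfl : q = q' := (d * seg (pairGen b) q m).2.injective (e₁.trans e₂.symm)
        obtain rfl : m = m' := by omega
        obtain rfl : k = q + m := by omega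
        rw [ih d d' hd hd' (mul_right_cancel e)]

end Perm

/-! ### Zero and the permutation of a non-zero class in `𝔹ₙ` -/

section BMZ

variable (n : ℕ)

theorem rel_eq {a b : FreeMonoid (Letter n)} (h : Rel n a b) :
    (bmzCon n).mk' a = (bmzCon n).mk' b :=
  (Con.eq _).2 (ConGen.Rel.of _ _ h)

theorem gen_mul_zero (i : Fin (n - 1)) : gen n i * zero n = zero n := rel_eq n (.zright i)

theorem zero_mul_gen (i : Fin (n - 1)) : zero n * gen n i = zero n := rel_eq n (.zleft i)

theorem zero_mul_zero : zero n * zero n = zero n := rel_eq n .zz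

theorem mul_zero_bmz (x : BMZ n) : x * zero n = zero n := by
  obtain ⟨w, rfl⟩ := Con.mk'_surjective (c := bmzCon n) x
  induction w using FreeMonoid.inductionOn' with
  | one => rw [map_one, one_mul]
  | of_mul a w ih =>
    rw [map_mul, mul_assoc, ih]
    cases a with
    | none => exact zero_mul_zero n
    | some i => exact gen_mul_zero n i

theorem zero_mul_bmz (x : BMZ n) : zero n * x = zero n := by
  obtain ⟨w, rfl⟩ := Con.mk'_surjective (c := bmzCon n) x
  induction w using FreeMonoid.inductionOn' with
  | one => rw [map_one, mul_one]
  | of_mul a w ih =>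
    have ha : zero n * (bmzCon n).mk' (FreeMonoid.of a) = zero n := by
      cases a with
      | none => exact zero_mul_zero n
      | some i => exact zero_mul_gen n i
    rw [map_mul, ← mul_assoc, ha, ih]

theorem eq_zero_or_toBMZ (x : BMZ n) : x = zero n ∨ ∃ w, toBMZ n w = x := by
  obtain ⟨w, rfl⟩ := Con.mk'_surjective (c := bmzCon n) x
  induction w using FreeMonoid.inductionOn' with
  | one => exact .inr ⟨1, by simp⟩
  | of_mul a w ih =>
    rw [map_mul]
    cases a with
    | none => exact .inl (zero_mul_bmz n _)
    | some i =>
      rcases ih with h | ⟨v, h⟩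
      · exact .inl (by rw [h, mul_zero_bmz])
      · exact .inr ⟨FreeMonoid.of i * v, by rw [map_mul, h]; rfl⟩

/-- `σ̃` extended to words containing `z`, with the arbitrary value `1` at `z`. -/
def permLetter : FreeMonoid (Letter n) →* Equiv.Perm (Fin n) :=
  FreeMonoid.lift (fun a => a.elim 1 (swapAt n))

theorem swapAt_val (i : Fin (n - 1)) (x : Fin n) : (swapAt n i x).val = nswap i.val x.val := by
  simp only [swapAt, nswap, Equiv.swap_apply_def, Fin.ext_iff, apply_ite Fin.val]

theorem swapAt_braid (i j : Fin (n - 1)) (h : j.val = i.val + 1) :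
    swapAt n j * swapAt n i * swapAt n j = swapAt n i * swapAt n j * swapAt n i := by
  ext x
  simp only [Equiv.Perm.mul_apply, swapAt_val, h]
  exact Equiv.congr_fun (nswap_braid i.val) x.val

theorem swapAt_comm (i j : Fin (n - 1)) (h : i.val + 1 < j.val) :
    swapAt n j * swapAt n i = swapAt n i * swapAt n j := by
  ext x
  simp only [Equiv.Perm.mul_apply, swapAt_val]
  exact Equiv.congr_fun (nswap_comm i.val j.val h) x.val

/-- Having the same class in `𝔹ₙ`, and the same permutation unless that class is zero, is a
congruence because the non-zero elements are closed under taking factors. -/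
def permCon : Con (FreeMonoid (Letter n)) where
  r a b := (bmzCon n).mk' a = (bmzCon n).mk' b ∧
    ((bmzCon n).mk' a ≠ zero n → permLetter n a = permLetter n b)
  iseqv :=
    { refl := fun _ => ⟨rfl, fun _ => rfl⟩
      symm := fun h => ⟨h.1.symm, fun h' => (h.2 (h.1 ▸ h')).symm⟩
      trans := fun h k => ⟨h.1.trans k.1, fun h' => (h.2 h').trans (k.2 (h.1 ▸ h'))⟩ }
  mul' := by
    intro a b c d h k
    refine ⟨by rw [map_mul, map_mul, h.1, k.1], fun h' => ?_⟩
    rw [map_mul] at h'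
    rw [map_mul, map_mul, h.2 fun e => h' (by rw [e, zero_mul_bmz]),
      k.2 fun e => h' (by rw [e, mul_zero_bmz])]

theorem bmzCon_le_permCon : bmzCon n ≤ permCon n := by
  refine Con.conGen_le.2 fun a b h => ⟨rel_eq n h, fun h0 => ?_⟩
  have h1 := rel_eq n h
  cases h with
  | comm i j h => simpa [permLetter] using swapAt_comm n i j h
  | braid i j h => simpa [permLetter] using swapAt_braid n i j h
  | square i => exact absurd h1 h0
  | zright i => exact absurd h1 h0
  | zleft i => exact absurd h1 h0
  | zz => exact absurd h1 h0

theorem toBMZ_eq (w : FreeMonoid (Fin (n - 1))) :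
    toBMZ n w = (bmzCon n).mk' (FreeMonoid.map some w) := by
  induction w using FreeMonoid.inductionOn' with
  | one => simp
  | of_mul a w ih =>
    rw [map_mul, map_mul, map_mul, ih]
    rfl

theorem permHom_eq (w : FreeMonoid (Fin (n - 1))) :
    permHom n w = permLetter n (FreeMonoid.map some w) := by
  induction w using FreeMonoid.inductionOn' with
  | one => simp
  | of_mul a w ih =>
    rw [map_mul, map_mul, map_mul, ih]
    rfl

theorem permHom_eq_of_toBMZ_eq (u v : FreeMonoid (Fin (n - 1))) (hu : toBMZ n u ≠ zero n)
    (h : toBMZ n u = toBMZ n v) : permHom n u = permHom n v := by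
  rw [permHom_eq, permHom_eq]
  rw [toBMZ_eq] at hu
  rw [toBMZ_eq, toBMZ_eq] at h
  exact (bmzCon_le_permCon n ((Con.eq _).1 h)).2 hu

/-! ### Words with non-zero class are canonical -/

/-- The generators of `𝔹ₙ` indexed by `ℕ` (from `0`), with the value zero out of range, so that
the defining relations hold for all indices. -/
def bgen (i : ℕ) : BMZ n := if h : i < n - 1 then gen n ⟨i, h⟩ else zero n

theorem bgen_comm (i j : ℕ) (h : i + 1 < j) : bgen n j * bgen n i = bgen n i * bgen n j := by
  unfold bgen
  split_ifs
  · exact rel_eq n (.comm _ _ h)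
  all_goals simp only [mul_zero_bmz, zero_mul_bmz]

theorem bgen_braid (i : ℕ) :
    bgen n (i + 1) * bgen n i * bgen n (i + 1) = bgen n i * bgen n (i + 1) * bgen n i := by
  unfold bgen
  split_ifs
  · exact rel_eq n (.braid _ _ rfl)
  all_goals simp only [mul_zero_bmz, zero_mul_bmz]

theorem bgen_sq (i : ℕ) : bgen n i * bgen n i = zero n := by
  unfold bgen
  split_ifs
  · exact rel_eq n (.square _)
  · exact zero_mul_zero n

/-- A word, sent to the pair of its class in `𝔹ₙ` and its permutation of `ℕ`. -/
def pairHom : FreeMonoid (Fin (n - 1)) →* BMZ n × Equiv.Perm ℕ :=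
  FreeMonoid.lift (fun i => pairGen (bgen n) i.val)

theorem pairHom_of (i : Fin (n - 1)) :
    pairHom n (FreeMonoid.of i) = pairGen (bgen n) i.val := rfl

theorem pairHom_fst (w : FreeMonoid (Fin (n - 1))) : (pairHom n w).1 = toBMZ n w := by
  induction w using FreeMonoid.inductionOn' with
  | one => simp
  | of_mul a w ih =>
    rw [map_mul, map_mul, Prod.fst_mul, ih, pairHom_of]
    simp [pairGen, bgen, toBMZ]

theorem pairHom_snd_lt (w : FreeMonoid (Fin (n - 1))) (x : Fin n) :
    (pairHom n w).2 x.val = (permHom n w x).val := by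
  induction w using FreeMonoid.inductionOn' with
  | one => simp
  | of_mul a w ih =>
    rw [map_mul, map_mul, Prod.snd_mul, Equiv.Perm.mul_apply, ih, pairHom_of]
    exact (swapAt_val n a (permHom n w x)).symm

theorem pairHom_snd_ge (w : FreeMonoid (Fin (n - 1))) (x : ℕ) (hx : n ≤ x) :
    (pairHom n w).2 x = x := by
  induction w using FreeMonoid.inductionOn' with
  | one => simp
  | of_mul a w ih =>
    rw [map_mul, Prod.snd_mul, Equiv.Perm.mul_apply, ih, pairHom_of]
    have := a.isLt
    exact Equiv.swap_apply_of_ne_of_ne (by omega) (by omega)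

theorem pairHom_snd_eq (u v : FreeMonoid (Fin (n - 1))) (h : permHom n u = permHom n v) :
    (pairHom n u).2 = (pairHom n v).2 := by
  ext x
  rcases Nat.lt_or_ge x n with hx | hx
  · have hu := pairHom_snd_lt n u ⟨x, hx⟩
    have hv := pairHom_snd_lt n v ⟨x, hx⟩
    rw [h] at hu
    exact hu.trans hv.symm
  · rw [pairHom_snd_ge n u x hx, pairHom_snd_ge n v x hx]

theorem can_mul_pairHom (w : FreeMonoid (Fin (n - 1))) (c : BMZ n × Equiv.Perm ℕ)
    (hc : Can (pairGen (bgen n)) n c) :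
    (c * pairHom n w).1 = zero n ∨ Can (pairGen (bgen n)) n (c * pairHom n w) := by
  induction w using FreeMonoid.inductionOn' generalizing c with
  | one => exact .inr (by simpa using hc)
  | of_mul a w ih =>
    rw [map_mul, ← mul_assoc]
    have ha := a.isLt
    rcases Can.mul (pairGen (bgen n))
      (fun i j h => Prod.ext (bgen_comm n i j h) (nswap_comm i j h))
      (fun i => Prod.ext (bgen_braid n i) (nswap_braid i))
      (fun x => x.1 = zero n)
      (fun x y h => by rw [Prod.fst_mul, h, mul_zero_bmz])
      (fun x y h => by rw [Prod.fst_mul, h, zero_mul_bmz])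
      (fun i => bgen_sq n i) n c hc a.val (by omega) with h | h
    · left
      rw [pairHom_of, Prod.fst_mul, h, zero_mul_bmz]
    · exact ih _ h

theorem can_pairHom (w : FreeMonoid (Fin (n - 1))) (hw : toBMZ n w ≠ zero n) :
    Can (pairGen (bgen n)) n (pairHom n w) := by
  have h := can_mul_pairHom n w 1 (Can.one _ n)
  rw [one_mul, pairHom_fst] at h
  exact h.resolve_left hw

theorem toBMZ_eq_of_permHom_eq (u v : FreeMonoid (Fin (n - 1))) (hu : toBMZ n u ≠ zero n)
    (hv : toBMZ n v ≠ zero n) (h : permHom n u = permHom n v) : toBMZ n u = toBMZ n v := by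
  rw [← pairHom_fst, ← pairHom_fst,
    Can.eq_of_snd_eq _ n _ _ (can_pairHom n u hu) (can_pairHom n v hv) (pairHom_snd_eq n u v h)]

end BMZ

/-- Let `u` and `v` be words in the free monoid on the letters
`β₁, …, β_{n−1}` whose images in the braid monoid with zero `𝔹ₙ` are non-zero.  Then
`u` and `v` have the same image in `𝔹ₙ` if and only if `σ̃(u) = σ̃(v)`.  In particular,
the induced function `σ : 𝔹ₙ ∖ {0} → Sₙ` (characterized by `σ_{β_p} = (p p+1)` and
`σ_{xy} = σ_x ∘ σ_y` for non-zero `x, y` with `xy ≠ 0`) is well defined and injective;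
this is recorded by the second conjunct. -/
theorem eq_iff_perm_eq (n : ℕ) (hn : 1 ≤ n) :
    (∀ u v : FreeMonoid (Fin (n - 1)),
      toBMZ n u ≠ zero n → toBMZ n v ≠ zero n →
        (toBMZ n u = toBMZ n v ↔ permHom n u = permHom n v)) ∧
    ∃ σ : BMZ n → Equiv.Perm (Fin n),
      (∀ w : FreeMonoid (Fin (n - 1)), toBMZ n w ≠ zero n → σ (toBMZ n w) = permHom n w) ∧
      (∀ x y : BMZ n, x ≠ zero n → y ≠ zero n → σ x = σ y → x = y) := by
  have key : ∀ u v : FreeMonoid (Fin (n - 1)), toBMZ n u ≠ zero n → toBMZ n v ≠ zero n →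
      (toBMZ n u = toBMZ n v ↔ permHom n u = permHom n v) := fun u v hu hv =>
    ⟨permHom_eq_of_toBMZ_eq n u v hu, toBMZ_eq_of_permHom_eq n u v hu hv⟩
  classical
  have hσ : ∀ w, toBMZ n w ≠ zero n →
      permHom n (Function.invFun (toBMZ n) (toBMZ n w)) = permHom n w := by
    intro w hw
    have e : toBMZ n (Function.invFun (toBMZ n) (toBMZ n w)) = toBMZ n w :=
      Function.invFun_eq ⟨w, rfl⟩
    exact permHom_eq_of_toBMZ_eq n _ _ (by rwa [e]) e
  -- Off the range of `toBMZ`, which contains every non-zero element, the value is irrelevant.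
  refine ⟨key, fun x => permHom n (Function.invFun (toBMZ n) x), hσ, fun x y hx hy h => ?_⟩
  obtain ⟨u, rfl⟩ := (eq_zero_or_toBMZ n x).resolve_left hx
  obtain ⟨v, rfl⟩ := (eq_zero_or_toBMZ n y).resolve_left hy
  exact (key u v hx hy).2 ((hσ u hx).symm.trans (h.trans (hσ v hy)))

end BraidMonoidZero
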